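/- Let σ be a permutation of a finite set of size n and let P be the associated n×n permutation matrix over a field. Then the characteristic polynomial of P equals (x-1)^f · ∏_{ℓ} (x^ℓ - 1), where f is the number of fixed points of σ and the product runs over the lengths ℓ of the nontrivial cycles of σ (with multiplicity); equivalently, the characteristic polynomial is the product of (x^{n_j} - 1) over all the cycles C_1, …, C_t of σ, of lengths n_1, …, n_t, where cycles of length 1 correspond to fixed points. -/

import Mathlib

open Polynomial

namespace Equiv.Perm

variable {R : Type*} [CommRing R] {ι : Type*} [DecidableEq ι]

theorem permMatrix_apply (σ : Perm ι) (i j : ι) :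
    σ.permMatrix R i j = if σ i = j then 1 else 0 := by
  simp [PEquiv.toMatrix_apply, eq_comm]

theorem Disjoint.permMatrix_add {σ τ : Perm ι} (h : Disjoint σ τ) :
    σ.permMatrix R + τ.permMatrix R = (σ * τ).permMatrix R + 1 := by
  ext i j
  simp only [Matrix.add_apply, permMatrix_apply, Matrix.one_apply]
  rcases h i with hi | hi
  · have hστ : (σ * τ) i = τ i := by rw [h.commute.eq, Perm.mul_apply, hi]
    simp only [hi, hστ, add_comm]
  · have hστ : (σ * τ) i = σ i := by rw [Perm.mul_apply, hi]
    simp only [hi, hστ]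

variable [Fintype ι]

/-- A permutation that at each point either fixes it or agrees with the cycle `σ` is trivial
or equal to `σ`. -/
theorem IsCycle.eq_one_or_eq_of_forall {σ π : Perm ι} (hσ : σ.IsCycle)
    (h : ∀ i, π i = i ∨ π i = σ i) : π = 1 ∨ π = σ := by
  refine or_iff_not_imp_left.2 fun hπ => ?_
  obtain ⟨i, hi⟩ : ∃ i, π i ≠ i := by
    by_contra! hc
    exact hπ (Equiv.ext hc)
  have key : ∀ n : ℕ, π ((σ ^ n) i) ≠ (σ ^ n) i := by
    intro n
    induction n with
    | zero => simpa using hi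
    | succ n ih =>
      have hn := (h ((σ ^ n) i)).resolve_left ih
      rw [pow_succ', Perm.mul_apply, ← hn]
      exact fun hc => ih (π.injective hc)
  have hσi : σ i ≠ i := fun hc => hi (by simpa [hc] using h i)
  ext j
  by_cases hj : σ j = j
  · simpa [hj] using h j
  · obtain ⟨n, rfl⟩ := hσ.exists_pow_eq hσi hj
    exact (h _).resolve_left (key n)

theorem card_fixed_add_card_support (σ : Perm ι) :
    (Finset.univ.filter fun i => σ i = i).card + σ.support.card = Fintype.card ι := by
  simpa [support] using Finset.card_filter_add_card_filter_not (s := Finset.univ) fun i => σ i = i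

theorem Disjoint.charpoly_permMatrix_mul {σ τ : Perm ι} (h : Disjoint σ τ) :
    ((σ * τ).permMatrix R).charpoly * (X - 1) ^ Fintype.card ι =
      (σ.permMatrix R).charpoly * (τ.permMatrix R).charpoly := by
  have hadd := congrArg (C : R →+* R[X]).mapMatrix (h.permMatrix_add (R := R))
  have hmul := congrArg (C : R →+* R[X]).mapMatrix
    (Matrix.permMatrix_mul (R := R) (σ := τ) (τ := σ))
  rw [← h.commute.eq] at hmul
  rw [map_add, map_add, map_one] at hadd
  rw [map_mul] at hmul
  rw [← Matrix.charpoly_one, Matrix.charpoly, Matrix.charpoly, Matrix.charpoly, Matrix.charpoly,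
    ← Matrix.det_mul, ← Matrix.det_mul]
  congr 1
  simp only [Matrix.charmatrix, map_one, hmul, Matrix.scalar_apply,
    ← Matrix.smul_one_eq_diagonal, sub_mul, mul_sub, smul_mul_assoc, mul_smul_comm, one_mul,
    mul_one]
  rw [hmul] at hadd
  linear_combination (norm := module) (X : R[X]) • hadd

theorem IsCycle.charpoly_permMatrix {σ : Perm ι} (hσ : σ.IsCycle) :
    (σ.permMatrix R).charpoly =
      (X - 1) ^ (Finset.univ.filter fun i => σ i = i).card * (X ^ σ.support.card - 1) := by
  rw [← Matrix.charpoly_transpose, Matrix.charpoly, Matrix.det_apply',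
    ← Finset.sum_subset (Finset.subset_univ {1, σ}), Finset.sum_pair hσ.ne_one.symm]
  · have split (a b : R[X]) : (∏ i, if σ i = i then a else b) =
        a ^ (Finset.univ.filter fun i => σ i = i).card * b ^ σ.support.card := by
      simp [Finset.prod_ite, support]
    have h1 : (∏ i, Matrix.charmatrix (σ.permMatrix R).transpose ((1 : Perm ι) i) i) =
        ∏ i, if σ i = i then (X - 1 : R[X]) else X := by
      refine Finset.prod_congr rfl fun i _ => ?_
      by_cases hi : σ i = i <;> simp [-Matrix.transpose_permMatrix, hi]
    have h2 : (∏ i, Matrix.charmatrix (σ.permMatrix R).transpose (σ i) i) =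
        ∏ i, if σ i = i then (X - 1 : R[X]) else -1 := by
      refine Finset.prod_congr rfl fun i _ => ?_
      by_cases hi : σ i = i <;> simp [-Matrix.transpose_permMatrix, hi]
    rw [h1, h2, split, split, hσ.sign]
    have h3 : (-1 : R[X]) ^ σ.support.card * (-1) ^ σ.support.card = 1 := by
      rw [← mul_pow]; simp
    push_cast
    simp only [sign_one, Units.val_one, Int.cast_one]
    linear_combination (-(X - 1) ^ (Finset.univ.filter fun i => σ i = i).card : R[X]) * h3
  · intro π _ hπ
    obtain ⟨i, hi⟩ : ∃ i, ¬ (π i = i ∨ π i = σ i) := by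
      by_contra! hc
      exact hπ (by simpa using hσ.eq_one_or_eq_of_forall hc)
    push Not at hi
    rw [Finset.prod_eq_zero (Finset.mem_univ i), mul_zero]
    simp [-Matrix.transpose_permMatrix, hi.1, hi.2.symm]

theorem charpoly_permMatrix (σ : Perm ι) :
    (σ.permMatrix R).charpoly =
      (X - 1) ^ (Finset.univ.filter fun i => σ i = i).card *
        (σ.cycleType.map fun ℓ => (X : R[X]) ^ ℓ - 1).prod := by
  induction σ using cycle_induction_on with
  | base_one => simp [Matrix.charpoly_one]
  | base_cycles σ hσ => simp [hσ.charpoly_permMatrix, hσ.cycleType]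
  | induction_disjoint σ τ h _ hσ hτ =>
    have hreg : IsRegular ((X - 1 : R[X]) ^ Fintype.card ι) := by
      simpa using ((monic_X_sub_C (1 : R)).pow (Fintype.card ι)).isRegular
    apply hreg.right
    have hcard : (Finset.univ.filter fun i => σ i = i).card +
        (Finset.univ.filter fun i => τ i = i).card =
        (Finset.univ.filter fun i => (σ * τ) i = i).card + Fintype.card ι := by
      have h1 := card_fixed_add_card_support σ
      have h2 := card_fixed_add_card_support τ
      have h3 := card_fixed_add_card_support (σ * τ)
      rw [h.card_support_mul] at h3
      omega
    have hpow := congrArg ((X - 1 : R[X]) ^ ·) hcard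
    simp only [pow_add] at hpow
    simp only [h.charpoly_permMatrix_mul, hσ, hτ, h.cycleType_mul, Multiset.map_add,
      Multiset.prod_add]
    linear_combination (σ.cycleType.map fun ℓ => (X : R[X]) ^ ℓ - 1).prod *
      (τ.cycleType.map fun ℓ => (X : R[X]) ^ ℓ - 1).prod * hpow

end Equiv.Perm

/-- The characteristic polynomial of the permutation matrix of a permutation `σ`
of a finite set of size `n` is `(X - 1)^f * ∏_ℓ (X^ℓ - 1)`, where `f` is the number
of fixed points of `σ` and the product runs over the lengths of the nontrivial
cycles of `σ` (with multiplicity, recorded by `σ.cycleType`). -/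
theorem stmt_9 {F : Type*} [Field F] {ι : Type*} [Fintype ι] [DecidableEq ι]
    (σ : Equiv.Perm ι) (P : Matrix ι ι F)
    (hP : ∀ i j, P i j = if σ j = i then 1 else 0) :
    P.charpoly =
      (Polynomial.X - 1) ^ ((Finset.univ.filter fun i => σ i = i).card) *
        (σ.cycleType.map fun ℓ => (Polynomial.X : F[X]) ^ ℓ - 1).prod := by
  have h : P = (σ.permMatrix F).transpose := by
    ext i j
    rw [hP, Matrix.transpose_apply, σ.permMatrix_apply]
  rw [h, Matrix.charpoly_transpose, σ.charpoly_permMatrix]
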